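/- Let U ⊆ ℝ^q be open and let f : U → ℝ^m be a mapping such that for every C^∞ curve c : ℝ → U the composition f ∘ c : ℝ → ℝ^m is locally Lipschitz. Then f is locally Lipschitz (Boman's theorem for Lipschitz mappings). -/

import Mathlib

/-!
If `f` is not Lipschitz near `x`, pick pairs `a n`, `b n` that converge to `x` as fast as we like
and at which the difference quotient of `f` exceeds any prescribed bound. A single smooth curve `c`
can be made to run from `a n` to `b n` along a straight line near the parameter `2⁻ⁿ`, at a small
prescribed speed `ε n`: glue the affine pieces with bump functions of disjoint supports, and let
`ε n` and the distances to `x` decay fast enough to beat the first `n` derivatives of the `n`-th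
bump function. If the difference quotients of `f` at these pairs are at least `n / ε n`, those of
`f ∘ c` blow up at `0`.
-/

open Filter Function Metric Set
open scoped ContDiff Topology

section DyadicBump

theorem add_div_four_le_dist_half_pow {i j : ℕ} (hij : i ≠ j) :
    (1 / 2 : ℝ) ^ i / 4 + (1 / 2) ^ j / 4 ≤ dist ((1 / 2 : ℝ) ^ i) ((1 / 2) ^ j) := by
  wlog h : i < j generalizing i j
  · rw [dist_comm, add_comm]
    exact this hij.symm (by omega)
  have hpow : (1 / 2 : ℝ) ^ j ≤ (1 / 2) ^ i / 2 := calc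
    (1 / 2 : ℝ) ^ j ≤ (1 / 2) ^ (i + 1) := pow_le_pow_of_le_one (by norm_num) (by norm_num) h
    _ = (1 / 2) ^ i / 2 := by ring
  have hpos : (0 : ℝ) < (1 / 2) ^ i := by positivity
  rw [Real.dist_eq]
  exact le_trans (by linarith) (le_abs_self _)

/-- A smooth plateau around the parameter `2⁻ⁿ`, at which the gluing construction visits the `n`-th
pair of points. The radii are small enough for the supports to be pairwise disjoint. -/
noncomputable def dyadicBump (n : ℕ) : ContDiffBump ((1 / 2 : ℝ) ^ n) where
  rIn := (1 / 2) ^ n / 8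
  rOut := (1 / 2) ^ n / 4
  rIn_pos := by positivity
  rIn_lt_rOut := div_lt_div_of_pos_left (by positivity) (by norm_num) (by norm_num)

theorem pairwise_disjoint_support_dyadicBump :
    Pairwise (Disjoint on fun n => support (dyadicBump n)) := fun i j hij => by
  simp only [onFun, ContDiffBump.support_eq]
  exact ball_disjoint_ball (add_div_four_le_dist_half_pow hij)

theorem dyadicBump_eq_zero_of_ne {i j : ℕ} (hij : i ≠ j) {t : ℝ}
    (ht : t ∈ closedBall ((1 / 2) ^ j) (dyadicBump j).rIn) : dyadicBump i t = 0 := by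
  have hj : t ∈ support (dyadicBump j) := by
    rw [ContDiffBump.support_eq]
    exact closedBall_subset_ball (dyadicBump j).rIn_lt_rOut ht
  exact notMem_support.1 ((pairwise_disjoint_support_dyadicBump hij).notMem_of_mem_right hj)

end DyadicBump

section BumpSegment

theorem exists_forall_norm_iteratedFDeriv_le_of_hasCompactSupport
    {V W : Type*} [NormedAddCommGroup V] [NormedSpace ℝ V] [NormedAddCommGroup W] [NormedSpace ℝ W]
    {g : V → W} {N : ℕ} (hg : ContDiff ℝ N g) (hsupp : HasCompactSupport g) :
    ∃ M, ∀ k ≤ N, ∀ y, ‖iteratedFDeriv ℝ k g y‖ ≤ M := by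
  have hbound (k : Fin (N + 1)) : ∃ C, ∀ y, ‖iteratedFDeriv ℝ k g y‖ ≤ C :=
    (hsupp.iteratedFDeriv k).exists_bound_of_continuous
      (hg.continuous_iteratedFDeriv (by exact_mod_cast k.is_le))
  choose C hC using hbound
  obtain ⟨M, hM⟩ := Finite.exists_le C
  exact ⟨M, fun k hk y => (hC ⟨k, Nat.lt_succ_of_le hk⟩ y).trans (hM _)⟩

variable {E : Type*} [NormedAddCommGroup E] [NormedSpace ℝ E] {t₀ : ℝ}

/-- The affine curve `t ↦ u + (t - t₀) • v`, cut off by a bump function centred at `t₀`. -/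
noncomputable def bumpSegment (φ : ContDiffBump t₀) (u v : E) (t : ℝ) : E :=
  φ t • (u + (t - t₀) • v)

theorem contDiff_bumpSegment (φ : ContDiffBump t₀) (u v : E) {k : ℕ∞} :
    ContDiff ℝ k (bumpSegment φ u v) :=
  φ.contDiff.smul (by fun_prop)

theorem bumpSegment_apply_of_mem_closedBall (φ : ContDiffBump t₀) (u v : E) {t : ℝ}
    (ht : t ∈ closedBall t₀ φ.rIn) : bumpSegment φ u v t = u + (t - t₀) • v := by
  rw [bumpSegment, φ.one_of_mem_closedBall ht, one_smul]

theorem exists_forall_norm_iteratedFDeriv_bumpSegment_le (φ : ContDiffBump t₀) (N : ℕ) :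
    ∃ M, ∀ u v : E, ∀ k ≤ N, ∀ t,
      ‖iteratedFDeriv ℝ k (bumpSegment φ u v) t‖ ≤ (‖u‖ + ‖v‖) * M := by
  -- `bumpSegment φ u v` is a linear image of a plane curve determined by `φ` alone.
  let γ : ℝ → ℝ × ℝ := fun t => φ t • (1, t - t₀)
  have hγ : ContDiff ℝ N γ := φ.contDiff.smul (by fun_prop)
  obtain ⟨M, hM⟩ := exists_forall_norm_iteratedFDeriv_le_of_hasCompactSupport hγ
    φ.hasCompactSupport.smul_right
  refine ⟨M, fun u v k hk t => ?_⟩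
  let L : ℝ × ℝ →L[ℝ] E := (ContinuousLinearMap.toSpanSingleton ℝ u).coprod
    (ContinuousLinearMap.toSpanSingleton ℝ v)
  have hL : ‖L‖ ≤ ‖u‖ + ‖v‖ := L.opNorm_le_bound (by positivity) fun p => calc
    ‖p.1 • u + p.2 • v‖ ≤ ‖p.1‖ * ‖u‖ + ‖p.2‖ * ‖v‖ := by
      simpa only [norm_smul] using norm_add_le (p.1 • u) (p.2 • v)
    _ ≤ ‖p‖ * ‖u‖ + ‖p‖ * ‖v‖ := by gcongr; exacts [norm_fst_le p, norm_snd_le p]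
    _ = (‖u‖ + ‖v‖) * ‖p‖ := by ring
  have hfactor : bumpSegment φ u v = L ∘ γ := by
    ext t
    simp [bumpSegment, L, γ, smul_smul]
  calc ‖iteratedFDeriv ℝ k (bumpSegment φ u v) t‖ ≤ ‖L‖ * ‖iteratedFDeriv ℝ k γ t‖ := by
        rw [hfactor]
        exact L.norm_iteratedFDeriv_comp_left hγ.contDiffAt (by exact_mod_cast hk)
    _ ≤ (‖u‖ + ‖v‖) * M := by gcongr; exact hM k hk t

theorem exists_pos_forall_norm_iteratedFDeriv_bumpSegment_le (φ : ContDiffBump t₀) (N : ℕ)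
    {η : ℝ} (hη : 0 < η) :
    ∃ ε > 0, ∀ u v : E, ‖u‖ ≤ ε → ‖v‖ ≤ ε → ∀ k ≤ N, ∀ t,
      ‖iteratedFDeriv ℝ k (bumpSegment φ u v) t‖ ≤ η := by
  obtain ⟨M, hM⟩ := exists_forall_norm_iteratedFDeriv_bumpSegment_le (E := E) φ N
  refine ⟨η / (2 * (|M| + 1)), by positivity, fun u v hu hv k hk t => ?_⟩
  calc ‖iteratedFDeriv ℝ k (bumpSegment φ u v) t‖ ≤ (‖u‖ + ‖v‖) * M := hM u v k hk t
    _ ≤ (‖u‖ + ‖v‖) * (|M| + 1) := by gcongr; linarith [le_abs_self M]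
    _ ≤ (η / (2 * (|M| + 1)) + η / (2 * (|M| + 1))) * (|M| + 1) := by gcongr
    _ = η := by field_simp; ring

end BumpSegment

section Curve

variable {E : Type*} [NormedAddCommGroup E] [NormedSpace ℝ E]

/-- The curve based at `x` which follows the line `a n + ℝ v n` near the parameter `2⁻ⁿ`, at time
`2⁻ⁿ` through `a n` and with velocity `v n`. -/
noncomputable def dyadicCurve (x : E) (a v : ℕ → E) (t : ℝ) : E :=
  x + ∑' n, bumpSegment (dyadicBump n) (a n - x) (v n) t

theorem dyadicCurve_apply_add (x : E) (a v : ℕ → E) (n : ℕ) {r : ℝ}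
    (hr : |r| ≤ (1 / 2) ^ n / 8) : dyadicCurve x a v ((1 / 2) ^ n + r) = a n + r • v n := by
  have ht : (1 / 2) ^ n + r ∈ closedBall ((1 / 2 : ℝ) ^ n) (dyadicBump n).rIn := by
    rwa [mem_closedBall, dist_self_add_left, Real.norm_eq_abs]
  rw [dyadicCurve, tsum_eq_single n fun j hj => by
      rw [bumpSegment, dyadicBump_eq_zero_of_ne hj ht, zero_smul],
    bumpSegment_apply_of_mem_closedBall _ _ _ ht]
  simp [← add_assoc]

variable (E) in
theorem exists_pos_forall_contDiff_dyadicCurve [CompleteSpace E] {δ : ℝ} (hδ : 0 < δ) :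
    ∃ ε : ℕ → ℝ, (∀ n, 0 < ε n) ∧ ∀ (x : E) (a v : ℕ → E),
      (∀ n, dist (a n) x ≤ ε n) → (∀ n, ‖v n‖ ≤ ε n) →
        ContDiff ℝ ∞ (dyadicCurve x a v) ∧ ∀ t, dyadicCurve x a v t ∈ ball x δ := by
  choose ε hε_pos hε using fun n => exists_pos_forall_norm_iteratedFDeriv_bumpSegment_le (E := E)
    (dyadicBump n) n (η := δ / 4 * (1 / 2) ^ n) (by positivity)
  refine ⟨ε, hε_pos, fun x a v ha hv => ?_⟩
  have hsum : HasSum (fun n => δ / 4 * (1 / 2 : ℝ) ^ n) (δ / 4 * 2) :=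
    hasSum_geometric_two.mul_left _
  have hderiv (n k : ℕ) (hk : k ≤ n) (t : ℝ) :
      ‖iteratedFDeriv ℝ k (bumpSegment (dyadicBump n) (a n - x) (v n)) t‖ ≤ δ / 4 * (1 / 2) ^ n :=
    hε n _ _ (by simpa only [dist_eq_norm] using ha n) (hv n) k hk t
  constructor
  · refine contDiff_const.add (contDiff_tsum_of_eventually
      (fun n => contDiff_bumpSegment _ _ _) (fun _ _ => hsum.summable) fun k _ => ?_)
    rw [Nat.cofinite_eq_atTop]
    filter_upwards [eventually_ge_atTop k] with n hn t using hderiv n k hn t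
  · intro t
    have hnorm := tsum_of_norm_bounded hsum fun n => by simpa using hderiv n 0 n.zero_le t
    rw [mem_ball_iff_norm, dyadicCurve, add_sub_cancel_left]
    linarith

theorem exists_norm_le_div_smul_eq {σ : ℝ} (hσ : 0 < σ) (w : E) :
    ∃ v : E, ‖v‖ ≤ σ ∧ (‖w‖ / σ) • v = w := by
  rcases eq_or_ne w 0 with rfl | hw
  · exact ⟨0, by simpa using hσ.le, by simp⟩
  have hw_norm : ‖w‖ ≠ 0 := norm_ne_zero_iff.2 hw
  refine ⟨(σ / ‖w‖) • w, le_of_eq ?_, ?_⟩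
  · rw [norm_smul, norm_div, norm_norm, Real.norm_of_nonneg hσ.le, div_mul_cancel₀ _ hw_norm]
  · rw [smul_smul, div_mul_div_cancel₀ hσ.ne', div_self hw_norm, one_smul]

variable (E) in
theorem exists_pos_forall_exists_contDiff_curve_through_pairs [CompleteSpace E]
    {δ : ℝ} (hδ : 0 < δ) :
    ∃ ε : ℕ → ℝ, (∀ n, 0 < ε n) ∧ ∀ (x : E) (a b : ℕ → E),
      (∀ n, dist (a n) x ≤ ε n) → (∀ n, dist (b n) x ≤ ε n) →
        ∃ c : ℝ → E, ContDiff ℝ ∞ c ∧ (∀ t, c t ∈ ball x δ) ∧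
          ∃ s t : ℕ → ℝ, Tendsto s atTop (𝓝 0) ∧ Tendsto t atTop (𝓝 0) ∧
            ∀ n, c (s n) = a n ∧ c (t n) = b n ∧ ε n * dist (s n) (t n) ≤ dist (a n) (b n) := by
  obtain ⟨σ, hσ, hcurve⟩ := exists_pos_forall_contDiff_dyadicCurve E hδ
  have hpow (n : ℕ) : (1 / 2 : ℝ) ^ n ≤ 1 := pow_le_one₀ (by norm_num) (by norm_num)
  have hscale (n : ℕ) : σ n * ((1 / 2) ^ n / 16) ≤ σ n :=
    mul_le_of_le_one_right (hσ n).le (by linarith [hpow n])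
  refine ⟨fun n => σ n * ((1 / 2) ^ n / 16), fun n => mul_pos (hσ n) (by positivity),
    fun x a b ha hb => ?_⟩
  let r : ℕ → ℝ := fun n => ‖b n - a n‖ / σ n
  have hr_nonneg (n : ℕ) : 0 ≤ r n := div_nonneg (norm_nonneg _) (hσ n).le
  have hr_le (n : ℕ) : r n ≤ (1 / 2) ^ n / 8 := by
    rw [div_le_iff₀ (hσ n), ← dist_eq_norm']
    linarith [dist_triangle_right (a n) (b n) x, ha n, hb n]
  choose v hv hrv using fun n => exists_norm_le_div_smul_eq (hσ n) (b n - a n)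
  obtain ⟨hsmooth, hball⟩ := hcurve x a v (fun n => (ha n).trans (hscale n)) hv
  have hs : Tendsto (fun n => (1 / 2 : ℝ) ^ n) atTop (𝓝 0) :=
    tendsto_pow_atTop_nhds_zero_of_lt_one (by norm_num) (by norm_num)
  have hr : Tendsto r atTop (𝓝 0) :=
    squeeze_zero hr_nonneg hr_le (by simpa using hs.div_const 8)
  refine ⟨dyadicCurve x a v, hsmooth, hball, fun n => (1 / 2) ^ n, fun n => (1 / 2) ^ n + r n,
    hs, by simpa using hs.add hr, fun n => ⟨?_, ?_, ?_⟩⟩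
  · simpa using dyadicCurve_apply_add x a v n (r := 0) (by rw [abs_zero]; positivity)
  · rw [dyadicCurve_apply_add x a v n (by rw [abs_of_nonneg (hr_nonneg n)]; exact hr_le n), hrv,
      add_sub_cancel]
  · calc σ n * ((1 / 2) ^ n / 16) * dist ((1 / 2 : ℝ) ^ n) ((1 / 2) ^ n + r n)
        = σ n * ((1 / 2) ^ n / 16) * r n := by
          rw [dist_self_add_right, Real.norm_of_nonneg (hr_nonneg n)]
      _ ≤ σ n * r n := by gcongr; exacts [hr_nonneg n, hscale n]
      _ = dist (a n) (b n) := by rw [mul_div_cancel₀ _ (hσ n).ne', dist_eq_norm']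

end Curve

theorem boman_locally_lipschitz_general {E F : Type*} [NormedAddCommGroup E] [NormedSpace ℝ E]
    [CompleteSpace E] [PseudoEMetricSpace F] {U : Set E} (hU : IsOpen U) {f : E → F}
    (hf : ∀ c : ℝ → E, ContDiff ℝ ∞ c → (∀ t, c t ∈ U) → LocallyLipschitz (f ∘ c)) :
    LocallyLipschitzOn U f := by
  intro x hx
  by_contra! hnot
  obtain ⟨δ, hδ, hδU⟩ := Metric.isOpen_iff.1 hU x hx
  obtain ⟨ε, hε, hcurve⟩ := exists_pos_forall_exists_contDiff_curve_through_pairs E hδ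
  have hsteep (n : ℕ) : ∃ a ∈ closedBall x (ε n), ∃ b ∈ closedBall x (ε n),
      ((n / ε n).toNNReal : ENNReal) * edist a b < edist (f a) (f b) := by
    simpa only [LipschitzOnWith, not_forall, not_le, exists_prop] using
      hnot _ _ (mem_nhdsWithin_of_mem_nhds (closedBall_mem_nhds x (hε n)))
  choose a ha b hb hab using hsteep
  obtain ⟨c, hc, hcball, s, t, hs, ht, hst⟩ := hcurve x a b ha hb
  obtain ⟨K, S, hS, hK⟩ := hf c hc (fun r => hδU (hcball r)) 0
  obtain ⟨n, hsn, htn, hKn⟩ := ((hs.eventually_mem hS).and ((ht.eventually_mem hS).and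
    (tendsto_natCast_atTop_atTop.eventually_ge_atTop (K : ℝ)))).exists
  obtain ⟨hcs, hct, hdist⟩ := hst n
  have hslope : K * nndist (s n) (t n) ≤ (n / ε n).toNNReal * nndist (a n) (b n) := by
    have hεn := hε n
    rw [← NNReal.coe_le_coe]
    push_cast
    rw [Real.coe_toNNReal _ (by positivity)]
    calc K * dist (s n) (t n) ≤ n * dist (s n) (t n) := by gcongr
      _ = n / ε n * (ε n * dist (s n) (t n)) := by field_simp
      _ ≤ n / ε n * dist (a n) (b n) := by gcongr
  refine (hab n).not_ge ?_
  calc edist (f (a n)) (f (b n)) ≤ K * edist (s n) (t n) := by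
        simpa only [comp_apply, hcs, hct] using hK hsn htn
    _ ≤ (n / ε n).toNNReal * edist (a n) (b n) := by
        simp only [edist_nndist]
        exact_mod_cast hslope

/-- **Boman's theorem for Lipschitz mappings.** If `f : U → ℝ^m` (with `U ⊆ ℝ^q` open) is
locally Lipschitz along every `C^∞`-curve in `U`, then `f` is locally Lipschitz. -/
theorem boman_locally_lipschitz
    (q m : ℕ) (U : Set (EuclideanSpace ℝ (Fin q))) (hU : IsOpen U)
    (f : EuclideanSpace ℝ (Fin q) → EuclideanSpace ℝ (Fin m))
    (hf : ∀ c : ℝ → EuclideanSpace ℝ (Fin q), ContDiff ℝ (⊤ : ℕ∞) c → (∀ t, c t ∈ U) →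
      ∀ t : ℝ, ∃ s : Set ℝ, s ∈ nhds t ∧ ∃ K : NNReal, LipschitzOnWith K (f ∘ c) s) :
    ∀ x ∈ U, ∃ s : Set (EuclideanSpace ℝ (Fin q)),
      s ⊆ U ∧ s ∈ nhds x ∧ ∃ K : NNReal, LipschitzOnWith K f s := by
  intro x hx
  obtain ⟨K, s, hs, hK⟩ := boman_locally_lipschitz_general hU
    (fun c hc hcU t => let ⟨s, hs, K, hK⟩ := hf c hc hcU t; ⟨K, s, hs, hK⟩) hx
  exact ⟨s ∩ U, inter_subset_right, inter_mem (hU.nhdsWithin_eq hx ▸ hs) (hU.mem_nhds hx), K,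
    hK.mono inter_subset_left⟩
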